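/- Let n ≥ 0 and assume the hypotheses guaranteeing that Q_n is Hilbert–Schmidt (so that for every g ∈ ℓ²_{w'} the defining series of Q_n g converges absolutely for each k). Then D_n Q_n g = g for every g ∈ ℓ²_{w'}; that is, β(k+n)(Q_n g)(k) − β(k)(μ(k+1)/μ(k))(Q_n g)(k+1) = g(k) for all k ≥ 0. In particular Ran(Q_n) ⊆ dom(D_n) and D_n : dom(D_n) → ℓ²_{w'} is surjective. -/

import Mathlib

/-- The difference operator `D_n` on sequences:
`(D_n f)(k) = β(k+n) f(k) − β(k) (μ(k+1)/μ(k)) f(k+1)`. -/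
noncomputable def Dn (β μ : ℕ → ℂ) (n : ℕ) (f : ℕ → ℂ) (k : ℕ) : ℂ :=
  β (k + n) * f k - β k * (μ (k + 1) / μ k) * f (k + 1)

/-- The integral kernel of the operator `Q_n`. -/
noncomputable def Qker (β μ : ℕ → ℂ) (n : ℕ) (k j : ℕ) : ℂ :=
  (∏ i ∈ Finset.range n, β (k + i)) / (∏ i ∈ Finset.range (n + 1), β (j + i)) *
    (μ j / μ k)

/-- The operator `Q_n`: `(Q_n g)(k) = Σ_{j=k}^∞ K_n(k,j) g(j)`. -/
noncomputable def Qop (β μ : ℕ → ℂ) (n : ℕ) (g : ℕ → ℂ) (k : ℕ) : ℂ :=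
  ∑' j : ℕ, if k ≤ j then Qker β μ n k j * g j else 0

/-- Membership in the weighted space `ℓ²_w`: `Σ_k w(k) |f(k)|² < ∞`. -/
def MemL2 (w : ℕ → ℝ) (f : ℕ → ℂ) : Prop :=
  Summable fun k => w k * ‖f k‖ ^ 2

/-- The Cauchy–Schwarz inequality for series weighted by `v⁻¹` and `v`. -/
theorem summable_and_sq_tsum_mul_le {v a b : ℕ → ℝ} (hv : ∀ j, 0 < v j)
    (ha : ∀ j, 0 ≤ a j) (hb : ∀ j, 0 ≤ b j)
    (hsa : Summable fun j => a j ^ 2 / v j) (hsb : Summable fun j => v j * b j ^ 2) :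
    (Summable fun j => a j * b j) ∧
      (∑' j, a j * b j) ^ 2 ≤ (∑' j, a j ^ 2 / v j) * ∑' j, v j * b j ^ 2 := by
  have hbound : ∀ s : Finset ℕ, (∑ j ∈ s, a j * b j) ^ 2 ≤
      (∑' j, a j ^ 2 / v j) * ∑' j, v j * b j ^ 2 := by
    intro s
    have hna : ∀ j, 0 ≤ a j ^ 2 / v j := fun j => div_nonneg (sq_nonneg _) (hv j).le
    have hnb : ∀ j, 0 ≤ v j * b j ^ 2 := fun j => mul_nonneg (hv j).le (sq_nonneg _)
    calc (∑ j ∈ s, a j * b j) ^ 2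
        ≤ (∑ j ∈ s, a j ^ 2 / v j) * ∑ j ∈ s, v j * b j ^ 2 := by
          refine Finset.sum_sq_le_sum_mul_sum_of_sq_le_mul s (fun j _ => hna j)
            (fun j _ => hnb j) fun j _ => le_of_eq ?_
          have := (hv j).ne'
          field_simp
      _ ≤ _ := mul_le_mul (hsa.sum_le_tsum s fun j _ => hna j)
          (hsb.sum_le_tsum s fun j _ => hnb j) (Finset.sum_nonneg fun j _ => hnb j)
          (tsum_nonneg hna)
  have hsum : Summable fun j => a j * b j :=
    summable_of_sum_le (fun j => mul_nonneg (ha j) (hb j))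
      fun s => Real.le_sqrt_of_sq_le (hbound s)
  exact ⟨hsum, le_of_tendsto (hsum.hasSum.pow 2) (Filter.Eventually.of_forall hbound)⟩

/-- A kernel that is Hilbert–Schmidt from `ℓ²_{w'}` to `ℓ²_w` acts by absolutely convergent
series. -/
theorem summable_norm_kernel_mul {w w' : ℕ → ℝ} (hw : ∀ k, 0 < w k) (hw' : ∀ k, 0 < w' k)
    {A : ℕ → ℕ → ℂ} (hA : Summable fun p : ℕ × ℕ => ‖A p.1 p.2‖ ^ 2 * (w p.1 / w' p.2))
    {g : ℕ → ℂ} (hg : MemL2 w' g) (k : ℕ) :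
    (Summable fun j => ‖A k j * g j‖) ∧
      w k * (∑' j, ‖A k j * g j‖) ^ 2 ≤
        (∑' j, ‖A k j‖ ^ 2 * (w k / w' j)) * ∑' j, w' j * ‖g j‖ ^ 2 := by
  have hrow : Summable fun j => ‖A k j‖ ^ 2 * (w k / w' j) := hA.prod_factor k
  have heq : ∀ j, ‖A k j‖ ^ 2 * (w k / w' j) = w k * (‖A k j‖ ^ 2 / w' j) := fun j => by ring
  simp only [heq] at hrow ⊢
  obtain ⟨hs, hle⟩ := summable_and_sq_tsum_mul_le hw' (fun j => norm_nonneg (A k j))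
    (fun j => norm_nonneg (g j)) ((summable_mul_left_iff (hw k).ne').1 hrow) hg
  simp only [norm_mul]
  refine ⟨hs, ?_⟩
  rw [tsum_mul_left, mul_assoc]
  exact mul_le_mul_of_nonneg_left hle (hw k).le

/-- A kernel that is Hilbert–Schmidt from `ℓ²_{w'}` to `ℓ²_w` maps `ℓ²_{w'}` into `ℓ²_w`. -/
theorem memL2_tsum_kernel_mul {w w' : ℕ → ℝ} (hw : ∀ k, 0 < w k) (hw' : ∀ k, 0 < w' k)
    {A : ℕ → ℕ → ℂ} (hA : Summable fun p : ℕ × ℕ => ‖A p.1 p.2‖ ^ 2 * (w p.1 / w' p.2))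
    {g : ℕ → ℂ} (hg : MemL2 w' g) : MemL2 w fun k => ∑' j, A k j * g j := by
  refine Summable.of_nonneg_of_le (fun k => mul_nonneg (hw k).le (sq_nonneg _)) (fun k => ?_)
    (hA.prod.mul_right (∑' j, w' j * ‖g j‖ ^ 2))
  obtain ⟨hs, hle⟩ := summable_norm_kernel_mul hw hw' hA hg k
  refine le_trans (mul_le_mul_of_nonneg_left ?_ (hw k).le) hle
  exact pow_le_pow_left₀ (norm_nonneg _) (norm_tsum_le_tsum_norm hs) 2

/-- The pointwise bound on the kernel of `Q_n` on and above the diagonal. -/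
theorem norm_Qker_le {β μ : ℕ → ℂ} (hβ : ∀ k, β k ≠ 0) {M c : ℝ} (hc : 0 < c)
    (hM : ∀ k j m : ℕ, k ≤ j →
      ‖∏ i ∈ Finset.range (m + 1), β (k + i)‖ ≤
        M * ‖∏ i ∈ Finset.range (m + 1), β (j + i)‖)
    (hβlow : ∀ k : ℕ, c * (1 + k) ≤ ‖β k‖) (n : ℕ) {k j : ℕ} (hkj : k ≤ j) :
    ‖Qker β μ n k j‖ ≤ M / c * (((j : ℝ) + 1)⁻¹ * ‖μ j / μ k‖) := by
  have hM1 : 1 ≤ M := by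
    have h := hM 0 0 0 le_rfl
    have hpos : 0 < ‖∏ i ∈ Finset.range (0 + 1), β (0 + i)‖ := by simpa using hβ 0
    exact (le_mul_iff_one_le_left hpos).1 h
  have hprod : ‖∏ i ∈ Finset.range n, β (k + i)‖ ≤ M * ‖∏ i ∈ Finset.range n, β (j + i)‖ := by
    cases n with
    | zero => simpa using hM1
    | succ m => exact hM k j m hkj
  have hP : 0 < ‖∏ i ∈ Finset.range n, β (j + i)‖ :=
    norm_pos_iff.2 (Finset.prod_ne_zero_iff.2 fun i _ => hβ _)
  have hlast : c * ((j : ℝ) + 1) ≤ ‖β (j + n)‖ := by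
    refine le_trans (mul_le_mul_of_nonneg_left ?_ hc.le) (hβlow (j + n))
    push_cast
    linarith [(Nat.cast_nonneg n : (0 : ℝ) ≤ n)]
  have hj : (0 : ℝ) < (j : ℝ) + 1 := by positivity
  rw [Qker, norm_mul, norm_div, Finset.prod_range_succ, norm_mul, ← mul_assoc]
  refine mul_le_mul_of_nonneg_right ?_ (norm_nonneg _)
  calc _ ≤ M * ‖∏ i ∈ Finset.range n, β (j + i)‖ /
        (‖∏ i ∈ Finset.range n, β (j + i)‖ * (c * ((j : ℝ) + 1))) := by gcongr
    _ = M / c * ((j : ℝ) + 1)⁻¹ := by field_simp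

/-- The kernel of `Q_n` satisfies the homogeneous equation of `D_n` in its first variable. -/
theorem mul_Qker_succ {β μ : ℕ → ℂ} (hμ : ∀ k, μ k ≠ 0) (n k j : ℕ) :
    β k * (μ (k + 1) / μ k) * Qker β μ n (k + 1) j = β (k + n) * Qker β μ n k j := by
  have hprod : β k * ∏ i ∈ Finset.range n, β (k + 1 + i) =
      (∏ i ∈ Finset.range n, β (k + i)) * β (k + n) := by
    rw [← Finset.prod_range_succ (fun i => β (k + i)), Finset.prod_range_succ', mul_comm]
    simp [add_assoc, add_comm 1]
  have hμratio : μ (k + 1) / μ k * (μ j / μ (k + 1)) = μ j / μ k := by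
    have := hμ k
    have := hμ (k + 1)
    field_simp
  calc _ = β k * (∏ i ∈ Finset.range n, β (k + 1 + i)) /
        (∏ i ∈ Finset.range (n + 1), β (j + i)) *
          (μ (k + 1) / μ k * (μ j / μ (k + 1))) := by rw [Qker]; ring
    _ = _ := by rw [hprod, hμratio, Qker]; ring

/-- On the diagonal the kernel of `Q_n` is inverse to the leading coefficient of `D_n`. -/
theorem mul_Qker_self {β μ : ℕ → ℂ} (hβ : ∀ k, β k ≠ 0) (hμ : ∀ k, μ k ≠ 0) (n k : ℕ) :
    β (k + n) * Qker β μ n k k = 1 := by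
  have hP : ∏ i ∈ Finset.range n, β (k + i) ≠ 0 := Finset.prod_ne_zero_iff.2 fun i _ => hβ _
  have := hβ (k + n)
  have := hμ k
  rw [Qker, Finset.prod_range_succ]
  field_simp

/-- `D_n` is a left inverse of `Q_n` wherever the series defining `Q_n` converge. -/
theorem Dn_Qop_apply {β μ : ℕ → ℂ} (hβ : ∀ k, β k ≠ 0) (hμ : ∀ k, μ k ≠ 0) (n : ℕ)
    {g : ℕ → ℂ} (hs : ∀ k, Summable fun j => if k ≤ j then Qker β μ n k j * g j else 0)
    (k : ℕ) : Dn β μ n (Qop β μ n g) k = g k := by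
  rw [Dn, Qop, Qop, ← tsum_mul_left, ← tsum_mul_left,
    ← ((hs k).mul_left _).tsum_sub ((hs (k + 1)).mul_left _), tsum_eq_single k]
  · simp [← mul_assoc, mul_Qker_self hβ hμ]
  · intro j hj
    by_cases hkj : k ≤ j
    · have hkj' : k + 1 ≤ j := by omega
      rw [if_pos hkj, if_pos hkj', ← mul_assoc, ← mul_assoc, mul_Qker_succ hμ, sub_self]
    · have hkj' : ¬ k + 1 ≤ j := by omega
      simp [hkj, hkj']

/-- under the hypotheses guaranteeing that `Q_n` is Hilbert–Schmidt,
for every `g ∈ ℓ²_{w'}` the series defining `Q_n g` converges absolutely at each `k`,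
and `D_n Q_n g = g`, i.e.
`β(k+n)(Q_n g)(k) − β(k)(μ(k+1)/μ(k))(Q_n g)(k+1) = g(k)` for all `k`.
In particular `Ran(Q_n) ⊆ dom(D_n)` and `D_n : dom(D_n) → ℓ²_{w'}` is surjective. -/
theorem statement4 (w w' : ℕ → ℝ) (hw : ∀ k, 0 < w k) (hw' : ∀ k, 0 < w' k)
    (β μ : ℕ → ℂ) (hβ : ∀ k, β k ≠ 0) (hμ : ∀ k, μ k ≠ 0) (hμ0 : μ 0 = 1)
    (M c : ℝ) (hc : 0 < c)
    (hM : ∀ k j m : ℕ, k ≤ j →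
      ‖∏ i ∈ Finset.range (m + 1), β (k + i)‖ ≤
        M * ‖∏ i ∈ Finset.range (m + 1), β (j + i)‖)
    (hβlow : ∀ k : ℕ, c * (1 + k) ≤ ‖β k‖)
    (hsum : Summable fun p : ℕ × ℕ =>
      ((max p.2 p.1 : ℝ) + 1)⁻¹ ^ 2 * ‖μ p.2 / μ p.1‖ ^ 2 * (w p.1 / w' p.2))
    (n : ℕ) :
    (∀ g : ℕ → ℂ, MemL2 w' g →
      (∀ k : ℕ, Summable fun j : ℕ => if k ≤ j then ‖Qker β μ n k j * g j‖ else 0) ∧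
      (∀ k : ℕ, Dn β μ n (Qop β μ n g) k = g k) ∧
      MemL2 w (Qop β μ n g)) ∧
    (∀ g : ℕ → ℂ, MemL2 w' g → ∃ f : ℕ → ℂ, MemL2 w f ∧ Dn β μ n f = g) := by
  have hA : Summable fun p : ℕ × ℕ =>
      ‖if p.1 ≤ p.2 then Qker β μ n p.1 p.2 else 0‖ ^ 2 * (w p.1 / w' p.2) := by
    refine Summable.of_nonneg_of_le
      (fun p => mul_nonneg (sq_nonneg _) (div_pos (hw _) (hw' _)).le) (fun p => ?_)
      (hsum.mul_left ((M / c) ^ 2))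
    have hpos := (div_pos (hw p.1) (hw' p.2)).le
    rw [← mul_assoc]
    refine mul_le_mul_of_nonneg_right ?_ hpos
    split_ifs with hp
    · have hmax : max (p.2 : ℝ) p.1 = p.2 := max_eq_left (Nat.cast_le.2 hp)
      rw [hmax, ← mul_pow, ← mul_pow]
      exact pow_le_pow_left₀ (norm_nonneg _) (norm_Qker_le hβ hc hM hβlow n hp) 2
    · rw [norm_zero, zero_pow two_ne_zero]
      positivity
  have key : ∀ g : ℕ → ℂ, MemL2 w' g →
      (∀ k : ℕ, Summable fun j : ℕ => if k ≤ j then ‖Qker β μ n k j * g j‖ else 0) ∧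
      (∀ k : ℕ, Dn β μ n (Qop β μ n g) k = g k) ∧
      MemL2 w (Qop β μ n g) := by
    intro g hg
    have hnorm := fun k => (summable_norm_kernel_mul hw hw'
      (A := fun k j => if k ≤ j then Qker β μ n k j else 0) hA hg k).1
    refine ⟨fun k => (hnorm k).congr fun j => ?_,
      Dn_Qop_apply hβ hμ n fun k => (hnorm k).of_norm.congr fun j => ?_, ?_⟩
    · split_ifs <;> simp
    · split_ifs <;> simp
    · have hmem := memL2_tsum_kernel_mul hw hw'
        (A := fun k j => if k ≤ j then Qker β μ n k j else 0) hA hg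
      simp only [ite_mul, zero_mul] at hmem
      exact hmem
  exact ⟨key, fun g hg => ⟨Qop β μ n g, (key g hg).2.2, funext (key g hg).2.1⟩⟩
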